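/- arXiv:2211.04697 — 12 statements merged into one kernel-verified Lean document; each statement's English description precedes it below -/
import Mathlib

section
/- Let Γ > 1, e ∈ (0,1), W₋ := (1−Γ⁻¹)e + Γ⁻¹, W₊ := (1−Γ)e + Γ, and α* := Γ/(1+Γ), and let Q be the unique real number with F(Q) = α*. Define h*(y) := W₋ for y ≤ Q and h*(y) := W₊ for y > Q. Then ∫ h* dμ = 1, and for every measurable h : ℝ → ℝ satisfying W₋ ≤ h(y) ≤ W₊ for μ-almost every y and ∫ h dμ = 1, one has ∫ y·h(y) dμ(y) ≤ ∫ y·h*(y) dμ(y) = W₊·E[Y·1{Y>Q}] + W₋·E[Y·1{Y≤Q}]. (Quantile-balancing solution: sharp upper bound of the linear program with the moment constraint.) -/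
open MeasureTheory

/-- Quantile-balancing solution: sharp upper bound of the linear program with the
moment constraint (Dorn–Guo).  `Q` is the `Γ/(1+Γ)`-quantile of `μ`,
`hstar = W₋` below `Q` and `W₊` above `Q`; it integrates to one and maximizes
`∫ y h(y) dμ` among mean-one weights `h` with `W₋ ≤ h ≤ W₊` a.e. -/
theorem stmt_2 (μ : Measure ℝ) [IsProbabilityMeasure μ] (p : ℝ → ℝ)
    (hp_cont : Continuous p) (hp_pos : ∀ x, 0 < p x)
    (hμ : μ = MeasureTheory.volume.withDensity fun x => ENNReal.ofReal (p x))
    (hmom : Integrable (fun y => y ^ 2) μ)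
    (Γ e : ℝ) (hΓ : 1 < Γ) (he : e ∈ Set.Ioo (0 : ℝ) 1)
    (Q : ℝ) (hQ : (μ (Set.Iic Q)).toReal = Γ / (1 + Γ))
    (hstar : ℝ → ℝ)
    (hhstar : ∀ y, hstar y = if y ≤ Q then (1 - Γ⁻¹) * e + Γ⁻¹ else (1 - Γ) * e + Γ) :
    (∫ y, hstar y ∂μ) = 1 ∧
    (∫ y, y * hstar y ∂μ) =
      ((1 - Γ) * e + Γ) * (∫ y in Set.Ioi Q, y ∂μ) +
        ((1 - Γ⁻¹) * e + Γ⁻¹) * (∫ y in Set.Iic Q, y ∂μ) ∧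
    ∀ h : ℝ → ℝ, Measurable h →
      (∀ᵐ y ∂μ, (1 - Γ⁻¹) * e + Γ⁻¹ ≤ h y ∧ h y ≤ (1 - Γ) * e + Γ) →
      (∫ y, h y ∂μ) = 1 →
      (∫ y, y * h y ∂μ) ≤ ∫ y, y * hstar y ∂μ := by
  have hid : Integrable (fun y : ℝ => y) μ := by
    refine Integrable.mono' (hmom.add (integrable_const (1 : ℝ)))
      measurable_id.aestronglyMeasurable (Filter.Eventually.of_forall fun y => ?_)
    simp only [Real.norm_eq_abs, Pi.add_apply]
    rcases abs_cases y with ⟨h1, _⟩ | ⟨h1, _⟩ <;> rw [h1] <;>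
      nlinarith [sq_nonneg (y - 1), sq_nonneg (y + 1)]
  have hΓ0 : 0 < Γ := by linarith
  set a : ℝ := (1 - Γ⁻¹) * e + Γ⁻¹ with ha
  set b : ℝ := (1 - Γ) * e + Γ with hb
  have hIoi : (μ (Set.Ioi Q)).toReal = 1 - Γ / (1 + Γ) := by
    rw [← Set.compl_Iic, ← hQ]
    exact probReal_compl_eq_one_sub measurableSet_Iic
  have hmeas : Measurable hstar := by
    have : hstar = fun y => if y ≤ Q then a else b := funext hhstar
    rw [this]
    exact Measurable.ite measurableSet_Iic measurable_const measurable_const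
  have hbd : ∀ (g : ℝ → ℝ), Measurable g → (∀ᵐ y ∂μ, ‖g y‖ ≤ |a| + |b|) →
      Integrable g μ ∧ Integrable (fun y => y * g y) μ := by
    intro g hg hgb
    refine ⟨Integrable.of_bound hg.aestronglyMeasurable _ hgb, ?_⟩
    exact hid.mul_bdd hg.aestronglyMeasurable hgb
  have hsbd : ∀ᵐ y ∂μ, ‖hstar y‖ ≤ |a| + |b| := by
    refine Filter.Eventually.of_forall fun y => ?_
    rw [hhstar, Real.norm_eq_abs]
    split_ifs
    · linarith [abs_nonneg b]
    · linarith [abs_nonneg a]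
  obtain ⟨hs1, hs2⟩ := hbd hstar hmeas hsbd
  have hmean : (∫ y, hstar y ∂μ) = 1 := by
    rw [← integral_add_compl (measurableSet_Iic (a := Q)) hs1, Set.compl_Iic,
      setIntegral_congr_fun (g := fun _ => a) measurableSet_Iic
        (fun y hy => by rw [hhstar, if_pos (Set.mem_Iic.mp hy)]),
      setIntegral_congr_fun (g := fun _ => b) measurableSet_Ioi
        (fun y hy => by rw [hhstar, if_neg (not_le.mpr (Set.mem_Ioi.mp hy))]),
      setIntegral_const, setIntegral_const, Measure.real, Measure.real, hQ, hIoi, ha, hb]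
    simp only [smul_eq_mul]
    field_simp
    ring
  refine ⟨hmean, ?_, ?_⟩
  · rw [← integral_add_compl (measurableSet_Iic (a := Q)) hs2, Set.compl_Iic,
      setIntegral_congr_fun (g := fun y => a * y) measurableSet_Iic
        (fun y hy => by simp only [hhstar, if_pos (Set.mem_Iic.mp hy), mul_comm]),
      setIntegral_congr_fun (g := fun y => b * y) measurableSet_Ioi
        (fun y hy => by simp only [hhstar, if_neg (not_le.mpr (Set.mem_Ioi.mp hy)), mul_comm]),
      integral_const_mul, integral_const_mul, add_comm]
  · intro h hh hab h1
    have hhbd : ∀ᵐ y ∂μ, ‖h y‖ ≤ |a| + |b| := by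
      filter_upwards [hab] with y hy
      rw [Real.norm_eq_abs, abs_le]
      constructor
      · linarith [hy.1, neg_abs_le a, abs_nonneg b]
      · linarith [hy.2, le_abs_self b, abs_nonneg a]
    obtain ⟨hi1, hi2⟩ := hbd h hh hhbd
    have key : (∫ y, (y * h y - Q * h y) ∂μ) ≤ ∫ y, (y * hstar y - Q * hstar y) ∂μ := by
      refine integral_mono_ae (hi2.sub (hi1.const_mul Q)) (hs2.sub (hs1.const_mul Q)) ?_
      filter_upwards [hab] with y hy
      rw [hhstar]
      split_ifs with hc
      · nlinarith [hy.1]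
      · nlinarith [hy.2]
    rw [integral_sub hi2 (hi1.const_mul Q), integral_sub hs2 (hs1.const_mul Q),
      integral_const_mul, integral_const_mul, h1, hmean] at key
    linarith
end

section
/- Let Γ > 1, e ∈ (0,1), W₋ := (1−Γ⁻¹)e + Γ⁻¹, W₊ := (1−Γ)e + Γ, and let Q' be the unique real number with F(Q') = 1/(1+Γ). Define h*(y) := W₊ for y ≤ Q' and h*(y) := W₋ for y > Q'. Then ∫ h* dμ = 1, and for every measurable h : ℝ → ℝ satisfying W₋ ≤ h(y) ≤ W₊ for μ-almost every y and ∫ h dμ = 1, one has ∫ y·h(y) dμ(y) ≥ ∫ y·h*(y) dμ(y) = W₊·E[Y·1{Y≤Q'}] + W₋·E[Y·1{Y>Q'}]. (Quantile-balancing solution: sharp lower bound of the linear program with the moment constraint.) -/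
open MeasureTheory

/-- Quantile-balancing solution: sharp lower bound of the linear program with the
moment constraint.  `Q'` is the `1/(1+Γ)`-quantile of `μ`, `hstar = W₊` below `Q'`
and `W₋` above `Q'`; it integrates to one and minimizes `∫ y h(y) dμ` among mean-one
weights `h` with `W₋ ≤ h ≤ W₊` a.e. -/
theorem stmt_3 (μ : Measure ℝ) [IsProbabilityMeasure μ] (p : ℝ → ℝ)
    (hp_cont : Continuous p) (hp_pos : ∀ x, 0 < p x)
    (hμ : μ = MeasureTheory.volume.withDensity fun x => ENNReal.ofReal (p x))
    (hmom : Integrable (fun y => y ^ 2) μ)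
    (Γ e : ℝ) (hΓ : 1 < Γ) (he : e ∈ Set.Ioo (0 : ℝ) 1)
    (Q' : ℝ) (hQ' : (μ (Set.Iic Q')).toReal = 1 / (1 + Γ))
    (hstar : ℝ → ℝ)
    (hhstar : ∀ y, hstar y = if y ≤ Q' then (1 - Γ) * e + Γ else (1 - Γ⁻¹) * e + Γ⁻¹) :
    (∫ y, hstar y ∂μ) = 1 ∧
    (∫ y, y * hstar y ∂μ) =
      ((1 - Γ) * e + Γ) * (∫ y in Set.Iic Q', y ∂μ) +
        ((1 - Γ⁻¹) * e + Γ⁻¹) * (∫ y in Set.Ioi Q', y ∂μ) ∧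
    ∀ h : ℝ → ℝ, Measurable h →
      (∀ᵐ y ∂μ, (1 - Γ⁻¹) * e + Γ⁻¹ ≤ h y ∧ h y ≤ (1 - Γ) * e + Γ) →
      (∫ y, h y ∂μ) = 1 →
      (∫ y, y * hstar y ∂μ) ≤ ∫ y, y * h y ∂μ := by
  set a := (1 - Γ) * e + Γ with ha
  set b := (1 - Γ⁻¹) * e + Γ⁻¹ with hb
  have hid : Integrable (fun y : ℝ => y) μ := by
    refine Integrable.mono' (hmom.add (integrable_const (1 : ℝ))) (by fun_prop) ?_
    refine Filter.Eventually.of_forall fun y => ?_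
    simp only [Pi.add_apply, Real.norm_eq_abs]
    nlinarith [sq_abs y, sq_nonneg (|y| - 1), abs_nonneg y]
  have hfun : hstar = fun y => if y ≤ Q' then a else b := funext hhstar
  have hmeas : Measurable hstar := by
    rw [hfun]
    exact Measurable.ite measurableSet_Iic measurable_const measurable_const
  have hbd : ∀ y, ‖hstar y‖ ≤ |a| + |b| := by
    intro y
    rw [hhstar, Real.norm_eq_abs]
    split_ifs
    · linarith [abs_nonneg b]
    · linarith [abs_nonneg a]
  have hsi : Integrable hstar μ :=
    Integrable.of_bound hmeas.aestronglyMeasurable (|a| + |b|) (Filter.Eventually.of_forall hbd)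
  have hysi : Integrable (fun y => y * hstar y) μ :=
    hid.mul_bdd hmeas.aestronglyMeasurable (Filter.Eventually.of_forall hbd)
  have hcompl : (Set.Iic Q')ᶜ = Set.Ioi Q' := Set.compl_Iic
  have hsplit : ∀ g : ℝ → ℝ, Integrable (fun y => g y * hstar y) μ →
      ∫ y, g y * hstar y ∂μ = a * (∫ y in Set.Iic Q', g y ∂μ) + b * (∫ y in Set.Ioi Q', g y ∂μ) := by
    intro g hg
    rw [← integral_add_compl (measurableSet_Iic (a := Q')) hg, hcompl,
      ← integral_const_mul, ← integral_const_mul]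
    congr 1
    · refine setIntegral_congr_fun measurableSet_Iic fun y hy => ?_
      have hy' : y ≤ Q' := hy
      simp only [hhstar, if_pos hy', mul_comm]
    · refine setIntegral_congr_fun measurableSet_Ioi fun y hy => ?_
      have hy' : ¬ y ≤ Q' := not_le.mpr hy
      simp only [hhstar, if_neg hy', mul_comm]
  have hone : ∫ y, hstar y ∂μ = 1 := by
    have h1 := hsplit (fun _ => 1) (by simpa using hsi)
    have h2 : μ.real (Set.Iic Q') = 1 / (1 + Γ) := hQ'
    have h3 : μ.real (Set.Ioi Q') = 1 - 1 / (1 + Γ) := by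
      rw [← hcompl, probReal_compl_eq_one_sub measurableSet_Iic, h2]
    simp only [one_mul, setIntegral_const, smul_eq_mul, mul_one, h2, h3] at h1
    rw [h1, ha, hb]
    have : Γ ≠ 0 := by linarith
    have : 1 + Γ ≠ 0 := by linarith
    field_simp
    ring
  refine ⟨hone, hsplit (fun y => y) hysi, ?_⟩
  intro h hm hbds hint
  have hhb : ∀ᵐ y ∂μ, ‖h y‖ ≤ |a| + |b| := by
    filter_upwards [hbds] with y hy
    rw [Real.norm_eq_abs, abs_le]
    constructor
    · linarith [neg_abs_le b, abs_nonneg a]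
    · linarith [le_abs_self a, abs_nonneg b]
  have hhi : Integrable h μ := Integrable.of_bound hm.aestronglyMeasurable _ hhb
  have hyhi : Integrable (fun y => y * h y) μ := hid.mul_bdd hm.aestronglyMeasurable hhb
  have key : ∫ y, (y * hstar y - Q' * hstar y) ∂μ ≤ ∫ y, (y * h y - Q' * h y) ∂μ := by
    refine integral_mono_ae (hysi.sub (hsi.const_mul Q')) (hyhi.sub (hhi.const_mul Q')) ?_
    filter_upwards [hbds] with y hy
    rw [hhstar]
    split_ifs with hc
    · nlinarith [mul_nonneg (sub_nonneg.mpr hc) (sub_nonneg.mpr hy.2)]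
    · nlinarith [mul_nonneg (sub_nonneg.mpr (not_le.mp hc).le) (sub_nonneg.mpr hy.1)]
  rw [integral_sub hysi (hsi.const_mul Q'), integral_sub hyhi (hhi.const_mul Q'),
    integral_const_mul, integral_const_mul, hone, hint] at key
  linarith
end

section
/- Fix θ > 0 and define f_θ(ξ) := E[(ξ−Y)·Y·1{Y≤ξ}] / E[(ξ−Y)·1{Y≤ξ}] − (E[Y] − θ) for ξ ∈ ℝ (the denominator E[(ξ−Y)·1{Y≤ξ}] is strictly positive for every ξ because the density of μ is strictly positive). Then f_θ is strictly increasing on ℝ and has exactly one root ξ*, and moreover ξ* > E[Y] − θ. -/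
open MeasureTheory

lemma aux_setInt (μ : Measure ℝ) (g : ℝ → ℝ) (ξ : ℝ) :
    ∫ y in Set.Iic ξ, (ξ - y) * g y ∂μ = ∫ y, max (ξ - y) 0 * g y ∂μ := by
  rw [← integral_indicator measurableSet_Iic]
  congr 1
  ext y
  by_cases h : y ≤ ξ
  · rw [Set.indicator_of_mem (by exact h), max_eq_left (by linarith)]
  · rw [Set.indicator_of_notMem (by exact h), max_eq_right (by linarith)]
    simp

lemma aux_bound (ξ y c t : ℝ) (h : |ξ| ≤ c) :
    |max (ξ - y) 0 * (y - t)| ≤ (c + |y|) * |y - t| := by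
  rw [abs_mul]
  apply mul_le_mul_of_nonneg_right _ (abs_nonneg _)
  rw [abs_of_nonneg (le_max_right _ _)]
  have h1 := le_abs_self ξ
  have h2 := neg_abs_le y
  have h3 := abs_nonneg ξ
  have h4 := abs_nonneg y
  exact max_le (by linarith) (by linarith)

/-- For `θ > 0`, the function
`f_θ(ξ) = E[(ξ-Y) Y 1{Y≤ξ}] / E[(ξ-Y) 1{Y≤ξ}] - (E[Y] - θ)`
(whose denominator is strictly positive for every `ξ`) is strictly increasing on `ℝ`
and has exactly one root `ξ*`, which moreover satisfies `ξ* > E[Y] - θ`. -/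
theorem stmt_4 (μ : Measure ℝ) [IsProbabilityMeasure μ] (p : ℝ → ℝ)
    (hp_cont : Continuous p) (hp_pos : ∀ x, 0 < p x)
    (hμ : μ = MeasureTheory.volume.withDensity fun x => ENNReal.ofReal (p x))
    (hmom : Integrable (fun y => y ^ 2) μ)
    (θ : ℝ) (hθ : 0 < θ) :
    (∀ ξ : ℝ, 0 < ∫ y in Set.Iic ξ, (ξ - y) ∂μ) ∧
    StrictMono (fun ξ : ℝ =>
      (∫ y in Set.Iic ξ, (ξ - y) * y ∂μ) / (∫ y in Set.Iic ξ, (ξ - y) ∂μ) -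
        ((∫ y, y ∂μ) - θ)) ∧
    ∃ ξstar : ℝ,
      ((∫ y in Set.Iic ξstar, (ξstar - y) * y ∂μ) / (∫ y in Set.Iic ξstar, (ξstar - y) ∂μ) -
          ((∫ y, y ∂μ) - θ) = 0) ∧
      (∫ y, y ∂μ) - θ < ξstar ∧
      ∀ ξ' : ℝ,
        ((∫ y in Set.Iic ξ', (ξ' - y) * y ∂μ) / (∫ y in Set.Iic ξ', (ξ' - y) ∂μ) -
            ((∫ y, y ∂μ) - θ) = 0) → ξ' = ξstar := by
  have hac : (volume : Measure ℝ) ≪ μ := by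
    rw [hμ]
    apply withDensity_absolutelyContinuous'
    · exact (ENNReal.measurable_ofReal.comp hp_cont.measurable).aemeasurable
    · exact Filter.Eventually.of_forall fun x => by simpa using hp_pos x
  haveI : μ.IsOpenPosMeasure := hac.isOpenPosMeasure
  clear hac hμ
  have hid : Integrable (fun y : ℝ => y) μ := by
    refine Integrable.mono' (hmom.add (integrable_const (1:ℝ))) (by fun_prop) ?_
    refine Filter.Eventually.of_forall fun y => ?_
    simp only [Real.norm_eq_abs, Pi.add_apply]
    nlinarith [sq_abs y, sq_nonneg (|y| - 1), abs_nonneg y]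
  have hB : ∀ c t : ℝ, Integrable (fun y => (c + |y|) * |y - t|) μ := by
    intro c t
    have h1 : Integrable (fun y : ℝ => |y * (y - t)|) μ := by
      have := (hmom.sub (hid.const_mul t)).abs
      refine this.congr (Filter.Eventually.of_forall fun y => ?_)
      simp only [Pi.sub_apply]
      congr 1; ring
    have h2 : Integrable (fun y : ℝ => c * |y - t|) μ :=
      ((hid.sub (integrable_const t)).abs).const_mul c
    refine (h2.add h1).congr (Filter.Eventually.of_forall fun y => ?_)
    simp only [Pi.add_apply, abs_mul]
    ring
  have hI : ∀ ξ t : ℝ, Integrable (fun y => max (ξ - y) 0 * (y - t)) μ := by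
    intro ξ t
    refine Integrable.mono' (hB |ξ| t) (by fun_prop) ?_
    exact Filter.Eventually.of_forall fun y => aux_bound ξ y _ t le_rfl
  have hW : ∀ ξ : ℝ, Integrable (fun y => max (ξ - y) 0) μ := by
    intro ξ
    refine ((hI ξ 0).sub (hI ξ 1)).congr (Filter.Eventually.of_forall fun y => ?_)
    simp only [Pi.sub_apply]
    ring
  have hN : ∀ ξ : ℝ, Integrable (fun y => max (ξ - y) 0 * y) μ := by
    intro ξ
    simpa using hI ξ 0
  obtain ⟨D, hD⟩ : ∃ D : ℝ → ℝ, ∀ ξ, D ξ = ∫ y, max (ξ - y) 0 ∂μ := ⟨_, fun _ => rfl⟩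
  obtain ⟨N, hNd⟩ : ∃ N : ℝ → ℝ, ∀ ξ, N ξ = ∫ y, max (ξ - y) 0 * y ∂μ := ⟨_, fun _ => rfl⟩
  have eN : ∀ ξ, ∫ y in Set.Iic ξ, (ξ - y) * y ∂μ = N ξ := by
    intro ξ
    rw [hNd]; exact aux_setInt μ (fun y => y) ξ
  have eD : ∀ ξ, ∫ y in Set.Iic ξ, (ξ - y) ∂μ = D ξ := by
    intro ξ
    rw [hD]; simpa using aux_setInt μ (fun _ => 1) ξ
  have hG : ∀ ξ t, ∫ y, max (ξ - y) 0 * (y - t) ∂μ = N ξ - t * D ξ := by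
    intro ξ t
    rw [hNd, hD, ← integral_const_mul, ← integral_sub (hN ξ) ((hW ξ).const_mul t)]
    congr 1; ext y; ring
  simp only [eN, eD]
  have Dpos : ∀ ξ, 0 < D ξ := by
    intro ξ
    rw [hD]
    refine integral_pos_of_integrable_nonneg_nonzero (x := ξ - 1) (by fun_prop) (hW ξ)
      (fun y => le_max_right _ _) ?_
    simp
  have Nlt : ∀ ξ, N ξ - ξ * D ξ < 0 := by
    intro ξ
    rw [← hG]
    have : 0 < ∫ y, -(max (ξ - y) 0 * (y - ξ)) ∂μ := by
      refine integral_pos_of_integrable_nonneg_nonzero (x := ξ - 1) (by fun_prop) (hI ξ ξ).neg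
        (fun y => ?_) ?_
      · simp only [Pi.zero_apply]
        rcases le_total y ξ with h | h
        · rw [max_eq_left (by linarith)]; nlinarith
        · rw [max_eq_right (by linarith)]; simp
      · simp
    rw [integral_neg] at this
    linarith
  have mono : ∀ a b, a < b → N a / D a < N b / D b := by
    intro a b hab
    obtain ⟨A, hA⟩ : ∃ A, A = N a / D a := ⟨_, rfl⟩
    have hA0 : N a - A * D a = 0 := by
      rw [hA]; field_simp [(Dpos a).ne']; ring
    have hAa : A < a := by
      rw [hA, div_lt_iff₀ (Dpos a)]; linarith [Nlt a]
    rw [← hA, lt_div_iff₀ (Dpos b)]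
    obtain ⟨c, hc⟩ : ∃ c, c = (b - a) / (a - A) := ⟨_, rfl⟩
    have hcpos : 0 < c := by rw [hc]; exact div_pos (by linarith) (by linarith)
    have hc' : c * (a - A) = b - a := by rw [hc]; field_simp [(sub_pos.2 hAa).ne']
    have key : 0 < ∫ y, (max (b - y) 0 * (y - A) - (1 + c) * (max (a - y) 0 * (y - A))) ∂μ := by
      refine integral_pos_of_integrable_nonneg_nonzero (x := A - 1) (by fun_prop)
        ((hI b A).sub ((hI a A).const_mul (1 + c))) (fun y => ?_) ?_
      · simp only [Pi.zero_apply]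
        rcases le_total y a with h | h
        · rw [max_eq_left (by linarith), max_eq_left (by linarith)]
          have : (b - y) * (y - A) - (1 + c) * ((a - y) * (y - A)) = c * (y - A) ^ 2 := by
            linear_combination (-(y - A)) * hc'
          rw [this]; positivity
        · rw [max_eq_right (a := a - y) (by linarith)]
          have := mul_nonneg (le_max_right (b - y) 0) (by linarith : 0 ≤ y - A)
          linarith
      · rw [max_eq_left (by linarith), max_eq_left (by linarith)]
        have : (b - (A - 1)) * (A - 1 - A) - (1 + c) * ((a - (A - 1)) * (A - 1 - A)) = c := by
          linear_combination hc'
        rw [this]; exact hcpos.ne'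
    rw [integral_sub (hI b A) ((hI a A).const_mul (1 + c)), integral_const_mul, hG, hG, hA0] at key
    linarith
  have smono : StrictMono (fun ξ : ℝ => N ξ / D ξ - ((∫ y, y ∂μ) - θ)) := by
    intro a b hab
    have := mono a b hab
    simp only
    linarith
  refine ⟨Dpos, smono, ?_⟩
  obtain ⟨t, ht⟩ : ∃ t, t = (∫ y, y ∂μ) - θ := ⟨_, rfl⟩
  rw [← ht] at smono ⊢
  have root : ∃ ξ, t < ξ ∧ N ξ - t * D ξ = 0 := by
    obtain ⟨K, hK⟩ : ∃ K, K = ∫ y, (y ^ 2 - t * y) ∂μ := ⟨_, rfl⟩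
    obtain ⟨b, hb⟩ : ∃ b, b = max t ((K + 1) / θ) := ⟨_, rfl⟩
    have htb : t ≤ b := hb ▸ le_max_left _ _
    have hbK : K + 1 ≤ b * θ := by
      rw [← div_le_iff₀ hθ]; exact hb ▸ le_max_right _ _
    have hi1 : Integrable (fun y : ℝ => b * (y - t)) μ :=
      (hid.sub (integrable_const t)).const_mul b
    have hi2 : Integrable (fun y : ℝ => y ^ 2 - t * y) μ := hmom.sub (hid.const_mul t)
    have hpos : 0 < N b - t * D b := by
      have h1 : ∫ y, (b * (y - t) - (y ^ 2 - t * y)) ∂μ = b * θ - K := by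
        rw [integral_sub hi1 hi2, integral_const_mul, integral_sub hid (integrable_const t), hK]
        simp only [integral_const, probReal_univ, one_smul, smul_eq_mul]
        rw [ht]; ring
      have h2 : ∫ y, (b * (y - t) - (y ^ 2 - t * y)) ∂μ ≤ ∫ y, max (b - y) 0 * (y - t) ∂μ := by
        refine integral_mono (hi1.sub hi2) (hI b t) fun y => ?_
        simp only
        rcases le_total y b with h | h
        · rw [max_eq_left (by linarith)]; apply le_of_eq; ring
        · rw [max_eq_right (by linarith)]; nlinarith
      rw [hG] at h2
      linarith
    have hcont : ContinuousOn (fun ξ => N ξ - t * D ξ) (Set.Icc t b) := by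
      simp only [← hG]
      refine continuousOn_of_dominated (bound := fun y => (max |t| |b| + |y|) * |y - t|)
        (fun ξ _ => (hI ξ t).aestronglyMeasurable) (fun ξ hξ => ?_) (hB _ t) ?_
      · exact Filter.Eventually.of_forall fun y =>
          aux_bound ξ y _ t (abs_le_max_abs_abs hξ.1 hξ.2)
      · exact Filter.Eventually.of_forall fun y => by fun_prop
    obtain ⟨x, hx, hx0⟩ := intermediate_value_Icc htb hcont
      (show (0:ℝ) ∈ Set.Icc _ _ from ⟨(Nlt t).le, hpos.le⟩)
    refine ⟨x, lt_of_le_of_ne hx.1 ?_, hx0⟩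
    rintro rfl
    exact (Nlt t).ne hx0
  obtain ⟨x, hx, hx0⟩ := root
  have hr : N x / D x - t = 0 := by
    rw [sub_eq_zero, div_eq_iff (Dpos x).ne']; linarith
  exact ⟨x, hr, hx, fun ξ' h => smono.injective (h.trans hr.symm)⟩
end

section
/- Define r(ξ) := E[(ξ−Y)·Y·1{Y≤ξ}] / E[(ξ−Y)·1{Y≤ξ}] for ξ ∈ ℝ. Then r is differentiable on ℝ with derivative r'(ξ) = V(ξ) / M(ξ)², where, writing E[g(Y) ∣ Y≤ξ] := E[g(Y)·1{Y≤ξ}]/F(ξ) (well defined since F(ξ) > 0), M(ξ) := E[ξ−Y ∣ Y≤ξ] and V(ξ) := E[Y² ∣ Y≤ξ] − (E[Y ∣ Y≤ξ])² is the conditional variance of Y given Y ≤ ξ; in particular r'(ξ) > 0 for every ξ. -/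
open MeasureTheory

theorem aux_deriv (μ : Measure ℝ) (p : ℝ → ℝ)
    (hp_cont : Continuous p) (hp_pos : ∀ x, 0 < p x)
    (hμ : μ = MeasureTheory.volume.withDensity fun x => ENNReal.ofReal (p x))
    (g : ℝ → ℝ) (hg : Continuous g) (hgi : Integrable g μ) (ξ : ℝ) :
    HasDerivAt (fun t : ℝ => ∫ y in Set.Iic t, g y ∂μ) (p ξ * g ξ) ξ := by
  have hmeas : Measurable fun x => ENNReal.ofReal (p x) := hp_cont.measurable.ennreal_ofReal
  have hint : Integrable (fun y => p y * g y) volume := by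
    rw [hμ, integrable_withDensity_iff_integrable_smul' hmeas (by simp)] at hgi
    refine hgi.congr (Filter.Eventually.of_forall fun y => ?_)
    simp [ENNReal.toReal_ofReal (hp_pos y).le]
  have heq : ∀ t, ∫ y in Set.Iic t, g y ∂μ
      = (∫ y in Set.Iic ξ, p y * g y) + ∫ y in ξ..t, p y * g y := by
    intro t
    rw [← intervalIntegral.integral_Iic_sub_Iic hint.integrableOn hint.integrableOn, hμ,
      setIntegral_withDensity_eq_setIntegral_toReal_smul hmeas (by simp) _ measurableSet_Iic]
    simp [ENNReal.toReal_ofReal (hp_pos _).le]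
  simp_rw [heq]
  refine HasDerivAt.const_add _ ?_
  have hc : Continuous fun y => p y * g y := hp_cont.mul hg
  exact intervalIntegral.integral_hasDerivAt_right (hc.intervalIntegrable _ _)
    (hc.stronglyMeasurableAtFilter _ _) hc.continuousAt

theorem aux_pos (μ : Measure ℝ) (hna : ∀ m, μ {m} = 0) (ξ m : ℝ) (h0 : 0 < μ (Set.Iic ξ))
    (f : ℝ → ℝ) (hf : ∀ y ≤ ξ, 0 ≤ f y) (hf' : ∀ y ≤ ξ, y ≠ m → f y ≠ 0)
    (hi : Integrable f μ) :
    0 < ∫ y in Set.Iic ξ, f y ∂μ := by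
  rw [setIntegral_pos_iff_support_of_nonneg_ae _ hi.integrableOn]
  · have : μ (Set.Iic ξ \ {m}) = μ (Set.Iic ξ) := measure_diff_null (hna m)
    rw [← this] at h0
    refine h0.trans_le (measure_mono ?_)
    rintro y ⟨hy, hm⟩
    exact ⟨hf' y hy hm, hy⟩
  · filter_upwards [ae_restrict_mem measurableSet_Iic] with y hy using hf y hy

/-- The ratio `r(ξ) = E[(ξ-Y) Y 1{Y≤ξ}] / E[(ξ-Y) 1{Y≤ξ}]` is differentiable with derivative
`r'(ξ) = V(ξ) / M(ξ)²` where, writing `F(ξ) = μ(Iic ξ) > 0`,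
`M(ξ) = E[ξ - Y ∣ Y ≤ ξ]` and `V(ξ)` is the conditional variance of `Y` given `Y ≤ ξ`;
in particular `r'(ξ) > 0` for every `ξ`. -/
theorem stmt_5 (μ : Measure ℝ) [IsProbabilityMeasure μ] (p : ℝ → ℝ)
    (hp_cont : Continuous p) (hp_pos : ∀ x, 0 < p x)
    (hμ : μ = MeasureTheory.volume.withDensity fun x => ENNReal.ofReal (p x))
    (hmom : Integrable (fun y => y ^ 2) μ) :
    ∀ ξ : ℝ,
      0 < (μ (Set.Iic ξ)).toReal ∧
      HasDerivAt
        (fun t : ℝ =>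
          (∫ y in Set.Iic t, (t - y) * y ∂μ) / (∫ y in Set.Iic t, (t - y) ∂μ))
        (((∫ y in Set.Iic ξ, y ^ 2 ∂μ) / (μ (Set.Iic ξ)).toReal -
            ((∫ y in Set.Iic ξ, y ∂μ) / (μ (Set.Iic ξ)).toReal) ^ 2) /
          ((∫ y in Set.Iic ξ, (ξ - y) ∂μ) / (μ (Set.Iic ξ)).toReal) ^ 2) ξ ∧
      0 < ((∫ y in Set.Iic ξ, y ^ 2 ∂μ) / (μ (Set.Iic ξ)).toReal -
            ((∫ y in Set.Iic ξ, y ∂μ) / (μ (Set.Iic ξ)).toReal) ^ 2) /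
          ((∫ y in Set.Iic ξ, (ξ - y) ∂μ) / (μ (Set.Iic ξ)).toReal) ^ 2 := by
  intro ξ
  have hmeas : Measurable fun x => ENNReal.ofReal (p x) := hp_cont.measurable.ennreal_ofReal
  have hac : volume ≪ μ := by
    rw [hμ]
    exact withDensity_absolutelyContinuous' hmeas.aemeasurable
      (Filter.Eventually.of_forall fun x => by simp [hp_pos x])
  have hac2 : μ ≪ volume := by
    rw [hμ]; exact withDensity_absolutelyContinuous _ _
  have hna : ∀ m, μ {m} = 0 := fun m => hac2 (by simp)
  have h0 : 0 < μ (Set.Iic ξ) := by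
    rw [pos_iff_ne_zero]
    intro h
    have := hac h
    simp at this
  have hF : 0 < (μ (Set.Iic ξ)).toReal := ENNReal.toReal_pos h0.ne' (measure_ne_top _ _)
  have hY : Integrable (fun y : ℝ => y) μ := by
    refine ((integrable_const (1 : ℝ)).add hmom).mono' measurable_id.aestronglyMeasurable
      (Filter.Eventually.of_forall fun y => ?_)
    simp only [Pi.add_apply, Real.norm_eq_abs, id]
    rw [abs_le]; constructor <;> nlinarith [sq_nonneg (y - 1), sq_nonneg (y + 1)]
  have h1 : Integrable (fun _ : ℝ => (1 : ℝ)) μ := integrable_const _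
  have dF := aux_deriv μ p hp_cont hp_pos hμ _ continuous_const h1 ξ
  have dB := aux_deriv μ p hp_cont hp_pos hμ _ continuous_id hY ξ
  have dC := aux_deriv μ p hp_cont hp_pos hμ _ (by fun_prop) hmom ξ
  have eF : ∀ t, (μ (Set.Iic t)).toReal = ∫ y in Set.Iic t, (1 : ℝ) ∂μ := by
    intro t; simp [Measure.real]
  have eD : ∀ t, ∫ y in Set.Iic t, (t - y) ∂μ
      = t * (∫ y in Set.Iic t, (1 : ℝ) ∂μ) - ∫ y in Set.Iic t, y ∂μ := by
    intro t
    rw [← integral_const_mul, ← integral_sub (h1.const_mul t).integrableOn hY.integrableOn]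
    simp
  have eN : ∀ t, ∫ y in Set.Iic t, (t - y) * y ∂μ
      = t * (∫ y in Set.Iic t, y ∂μ) - ∫ y in Set.Iic t, y ^ 2 ∂μ := by
    intro t
    rw [← integral_const_mul, ← integral_sub (hY.const_mul t).integrableOn hmom.integrableOn]
    congr 1; ext y; ring
  have hD : 0 < ∫ y in Set.Iic ξ, (ξ - y) ∂μ := by
    refine aux_pos μ hna ξ ξ h0 _ (fun y hy => by linarith) (fun y hy hne h => hne (by linarith)) ?_
    exact (integrable_const ξ).sub hY
  have hV : ∀ m : ℝ, 0 < (∫ y in Set.Iic ξ, y ^ 2 ∂μ) - 2 * m * (∫ y in Set.Iic ξ, y ∂μ)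
      + m ^ 2 * (∫ y in Set.Iic ξ, (1 : ℝ) ∂μ) := by
    intro m
    have hi : Integrable (fun y => y ^ 2 - 2 * m * y) μ := hmom.sub (hY.const_mul (2 * m))
    have hi2 : Integrable (fun y => y ^ 2 - 2 * m * y + m ^ 2 * 1) μ :=
      hi.add (h1.const_mul (m ^ 2))
    rw [← integral_const_mul, ← integral_const_mul,
      ← integral_sub hmom.integrableOn (hY.const_mul (2 * m)).integrableOn,
      ← integral_add hi.integrableOn (h1.const_mul (m ^ 2)).integrableOn]
    refine aux_pos μ hna ξ m h0 _ (fun y _ => by nlinarith [sq_nonneg (y - m)])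
      (fun y _ hne h => hne ?_) hi2
    have : (y - m) ^ 2 = 0 := by linarith
    have := pow_eq_zero_iff (two_ne_zero) |>.1 this
    linarith
  have dN' := ((hasDerivAt_id ξ).mul dB).sub dC
  have dD' := ((hasDerivAt_id ξ).mul dF).sub dB
  have hVF := hV ((∫ y in Set.Iic ξ, y ∂μ) / (μ (Set.Iic ξ)).toReal)
  rw [eD] at hD
  rw [eF] at hF hVF ⊢
  simp only [eD, eN]
  have dR := dN'.div dD' (by simpa using hD.ne')
  generalize hFe : (∫ y in Set.Iic ξ, (1 : ℝ) ∂μ) = F at *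
  generalize hBe : (∫ y in Set.Iic ξ, y ∂μ) = B at *
  generalize hCe : (∫ y in Set.Iic ξ, y ^ 2 ∂μ) = C at *
  refine ⟨hF, ?_, ?_⟩
  · refine HasDerivAt.congr_deriv dR ?_
    simp only [Pi.sub_apply, Pi.mul_apply, id, hFe, hBe, hCe]
    have := hD.ne'
    field_simp
    ring
  · refine div_pos ?_ (by positivity)
    have : C - 2 * (B / F) * B + (B / F) ^ 2 * F = F * (C / F - (B / F) ^ 2) := by
      field_simp; ring
    rw [this] at hVF
    exact pos_of_mul_pos_right hVF hF.le
end

section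
/- Fix θ > 0 and define f_θ(ξ) := E[(ξ−Y)·Y·1{Y≤ξ}] / E[(ξ−Y)·1{Y≤ξ}] − (E[Y] − θ). Then f_θ(ξ) < 0 for every ξ ≤ E[Y] − θ. (Indeed the numerator of f_θ equals E[(ξ−Y)(Y − E[Y] + θ)·1{Y≤ξ}] = −E[(ξ−Y)²·1{Y≤ξ}] + (ξ − E[Y] + θ)·E[(ξ−Y)·1{Y≤ξ}], which is strictly negative when ξ ≤ E[Y] − θ.) -/
open MeasureTheory

/-- For `θ > 0`, the function
`f_θ(ξ) = E[(ξ-Y) Y 1{Y≤ξ}] / E[(ξ-Y) 1{Y≤ξ}] - (E[Y] - θ)` is strictly negative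
for every `ξ ≤ E[Y] - θ`. -/
theorem stmt_6 (μ : Measure ℝ) [IsProbabilityMeasure μ] (p : ℝ → ℝ)
    (hp_cont : Continuous p) (hp_pos : ∀ x, 0 < p x)
    (hμ : μ = MeasureTheory.volume.withDensity fun x => ENNReal.ofReal (p x))
    (hmom : Integrable (fun y => y ^ 2) μ)
    (θ : ℝ) (hθ : 0 < θ) :
    ∀ ξ : ℝ, ξ ≤ (∫ y, y ∂μ) - θ →
      (∫ y in Set.Iic ξ, (ξ - y) * y ∂μ) / (∫ y in Set.Iic ξ, (ξ - y) ∂μ) -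
        ((∫ y, y ∂μ) - θ) < 0 := by
  intro ξ hξ
  have hac : (volume : Measure ℝ) ≪ μ := by
    rw [hμ]
    apply withDensity_absolutelyContinuous'
    · exact (hp_cont.measurable.ennreal_ofReal).aemeasurable
    · exact Filter.Eventually.of_forall fun x => by simpa using hp_pos x
  have hpos : 0 < μ (Set.Iio ξ) := by
    rw [pos_iff_ne_zero]
    intro h
    have := hac h
    simp at this
  have hmem : MemLp (fun y : ℝ => y) 2 μ :=
    (memLp_two_iff_integrable_sq measurable_id.aestronglyMeasurable).2 hmom
  have hid : Integrable (fun y : ℝ => y) μ := hmem.integrable (by norm_num)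
  have hD : Integrable (fun y : ℝ => ξ - y) μ := (integrable_const ξ).sub hid
  have hS : Integrable (fun y : ℝ => (ξ - y) ^ 2) μ := by
    have : (fun y : ℝ => (ξ - y) ^ 2) = fun y => (ξ ^ 2 - 2 * ξ * y) + y ^ 2 := by
      funext y; ring
    rw [this]
    exact ((integrable_const _).sub (hid.const_mul _)).add hmom
  have key : ∀ g : ℝ → ℝ, Integrable g μ → (∀ y, y ≤ ξ → 0 ≤ g y) → (∀ y, y < ξ → g y ≠ 0) →
      0 < ∫ y in Set.Iic ξ, g y ∂μ := by
    intro g hg h0 h1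
    rw [setIntegral_pos_iff_support_of_nonneg_ae]
    · refine hpos.trans_le (measure_mono fun y hy => ⟨h1 y hy, ?_⟩)
      exact le_of_lt (show y < ξ from hy)
    · filter_upwards [ae_restrict_mem measurableSet_Iic] with y hy
      exact h0 y hy
    · exact hg.integrableOn
  have hDpos := key _ hD (fun y hy => by linarith) (fun y hy => by
    have : 0 < ξ - y := by linarith
    exact this.ne')
  have hSpos := key _ hS (fun y hy => by positivity) (fun y hy => by
    have : 0 < ξ - y := by linarith
    positivity)
  have hN : (∫ y in Set.Iic ξ, (ξ - y) * y ∂μ)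
      = ξ * (∫ y in Set.Iic ξ, (ξ - y) ∂μ) - ∫ y in Set.Iic ξ, (ξ - y) ^ 2 ∂μ := by
    rw [← integral_const_mul, ← integral_sub (hD.const_mul ξ).integrableOn hS.integrableOn]
    congr 1
    funext y
    ring
  have : (∫ y in Set.Iic ξ, (ξ - y) * y ∂μ) / (∫ y in Set.Iic ξ, (ξ - y) ∂μ) < ξ := by
    rw [div_lt_iff₀ hDpos, hN]
    linarith
  linarith
end

section
/- Let θ > 0, let 0 ≤ W₋ < W₊ be real numbers, let λ > 0, and suppose ξ ∈ ℝ is such that the winsorized function h*(y) := min(W₊, max(W₋, λ·(ξ−y))) satisfies ∫ h* dμ = 1 and ∫ y·h*(y) dμ(y) = E[Y] − θ. Then for every measurable h : ℝ → ℝ with W₋ ≤ h(y) ≤ W₊ for μ-almost every y, ∫ h dμ = 1, and ∫ y·h(y) dμ(y) ≤ E[Y] − θ, one has ∫ h² dμ ≥ ∫ (h*)² dμ. (Solution of the sensitivity-value program subject additionally to the marginal sensitivity model bounds W₋ ≤ h ≤ W₊.) -/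
open MeasureTheory

/-- Solution of the sensitivity-value program subject additionally to the marginal
sensitivity model bounds `W₋ ≤ h ≤ W₊`: the winsorized weight
`h*(y) = min(W₊, max(W₋, λ (ξ - y)))`, assumed to satisfy the mean-one and
outcome-shift constraints, minimizes the second moment among all a.e.-bounded
mean-one weights with `∫ y h(y) dμ ≤ E[Y] - θ`. -/
theorem stmt_8 (μ : Measure ℝ) [IsProbabilityMeasure μ] (p : ℝ → ℝ)
    (hp_cont : Continuous p) (hp_pos : ∀ x, 0 < p x)
    (hμ : μ = MeasureTheory.volume.withDensity fun x => ENNReal.ofReal (p x))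
    (hmom : Integrable (fun y => y ^ 2) μ)
    (θ : ℝ) (hθ : 0 < θ)
    (Wm Wp : ℝ) (hWm : 0 ≤ Wm) (hWmp : Wm < Wp)
    (lam : ℝ) (hlam : 0 < lam) (ξ : ℝ)
    (hstar : ℝ → ℝ) (hhstar : ∀ y, hstar y = min Wp (max Wm (lam * (ξ - y))))
    (hmean : (∫ y, hstar y ∂μ) = 1)
    (hshift : (∫ y, y * hstar y ∂μ) = (∫ y, y ∂μ) - θ) :
    ∀ h : ℝ → ℝ, Measurable h →
      (∀ᵐ y ∂μ, Wm ≤ h y ∧ h y ≤ Wp) →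
      (∫ y, h y ∂μ) = 1 → (∫ y, y * h y ∂μ) ≤ (∫ y, y ∂μ) - θ →
      (∫ y, hstar y ^ 2 ∂μ) ≤ ∫ y, h y ^ 2 ∂μ := by
  intro h hm hb h1 h2
  have hy : Integrable (fun y : ℝ => y) μ := by
    refine Integrable.mono' (hmom.add (integrable_const (1:ℝ))) (by fun_prop) (ae_of_all _ ?_)
    intro y
    simp only [Pi.add_apply, Real.norm_eq_abs]
    rw [← sq_abs y]
    nlinarith [sq_nonneg (|y| - 1), abs_nonneg y]
  have hsm : Measurable hstar := by
    have : hstar = fun y => min Wp (max Wm (lam * (ξ - y))) := funext hhstar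
    rw [this]; fun_prop
  have hsb : ∀ᵐ y ∂μ, Wm ≤ hstar y ∧ hstar y ≤ Wp := by
    refine ae_of_all _ fun y => ?_
    rw [hhstar]
    exact ⟨le_min hWmp.le (le_max_left _ _), min_le_left _ _⟩
  have key : ∀ g : ℝ → ℝ, Measurable g → (∀ᵐ y ∂μ, Wm ≤ g y ∧ g y ≤ Wp) →
      Integrable g μ ∧ Integrable (fun y => y * g y) μ ∧ Integrable (fun y => g y ^ 2) μ := by
    intro g hg hgb
    refine ⟨?_, ?_, ?_⟩
    · refine Integrable.mono' (integrable_const Wp) hg.aestronglyMeasurable ?_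
      filter_upwards [hgb] with y hy
      rw [Real.norm_eq_abs, abs_of_nonneg (hWm.trans hy.1)]
      exact hy.2
    · refine Integrable.mono' (hy.norm.const_mul Wp) (by fun_prop) ?_
      filter_upwards [hgb] with y hy
      rw [norm_mul, Real.norm_eq_abs (g y), abs_of_nonneg (hWm.trans hy.1), mul_comm]
      exact mul_le_mul_of_nonneg_right hy.2 (norm_nonneg _)
    · refine Integrable.mono' (integrable_const (Wp ^ 2)) (by fun_prop) ?_
      filter_upwards [hgb] with y hy
      have h0 := hWm.trans hy.1
      rw [Real.norm_eq_abs, abs_of_nonneg (sq_nonneg _)]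
      exact pow_le_pow_left₀ h0 hy.2 2
  obtain ⟨a1, a2, a3⟩ := key h hm hb
  obtain ⟨b1, b2, b3⟩ := key hstar hsm hsb
  have i1 : Integrable (fun y => 2 * lam * ξ * (h y - hstar y)) μ := (a1.sub b1).const_mul _
  have i2 : Integrable (fun y => 2 * lam * (y * h y - y * hstar y)) μ :=
    (a2.sub b2).const_mul _
  have e1 : ∫ y, 2 * lam * ξ * (h y - hstar y) ∂μ = 0 := by
    rw [integral_const_mul, integral_sub a1 b1, h1, hmean]; ring
  have e2 : ∫ y, 2 * lam * (y * h y - y * hstar y) ∂μ ≤ 0 := by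
    rw [integral_const_mul, integral_sub a2 b2]
    exact mul_nonpos_of_nonneg_of_nonpos (by positivity) (by linarith)
  have mono : ∫ y, (2 * lam * ξ * (h y - hstar y) - 2 * lam * (y * h y - y * hstar y)) ∂μ
      ≤ ∫ y, (h y ^ 2 - hstar y ^ 2) ∂μ := by
    refine integral_mono_ae (i1.sub i2) (a3.sub b3) ?_
    filter_upwards [hb] with y hy
    have hs : 0 ≤ (hstar y - lam * (ξ - y)) * (h y - hstar y) := by
      rw [hhstar]
      rcases le_total (lam * (ξ - y)) Wm with c | c
      · rw [max_eq_left c, min_eq_right hWmp.le]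
        exact mul_nonneg (by linarith) (by linarith [hy.1])
      · rw [max_eq_right c]
        rcases le_total (lam * (ξ - y)) Wp with d | d
        · rw [min_eq_right d]; simp
        · rw [min_eq_left d]
          exact mul_nonneg_of_nonpos_of_nonpos (by linarith) (by linarith [hy.2])
    nlinarith [sq_nonneg (h y - hstar y)]
  rw [integral_sub i1 i2, integral_sub a3 b3] at mono
  linarith
end

section
/- Let λ > 0 and let ξ ∈ ℝ be the unique real number with E[(ξ−Y)·1{Y≤ξ}] = 1/λ. Define h*(y) := λ·(ξ−y)·1{y≤ξ}. Then h* ≥ 0, ∫ h* dμ = 1, and for every measurable h : ℝ → [0,∞) with ∫ h dμ = 1, ∫ h² dμ < ∞ and ∫ |y|·h(y) dμ(y) < ∞, one has (1/2)·∫ h² dμ + λ·∫ y·h(y) dμ(y) ≥ (1/2)·∫ (h*)² dμ + λ·∫ y·h*(y) dμ(y). (Closed-form solution of the Lagrangian formulation of the L²-sensitivity analysis.) -/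
open MeasureTheory

/-- Closed-form solution of the Lagrangian formulation of the `L²`-sensitivity analysis:
with `ξ` the unique real satisfying `E[(ξ-Y) 1{Y≤ξ}] = 1/λ` and
`h*(y) = λ (ξ-y) 1{y≤ξ}`, the weight `h*` is nonnegative, has mean one, and minimizes
`(1/2) ∫ h² dμ + λ ∫ y h(y) dμ` among nonnegative mean-one weights `h` with finite
second moment and `∫ |y| h(y) dμ < ∞`. -/
theorem stmt_10 (μ : Measure ℝ) [IsProbabilityMeasure μ] (p : ℝ → ℝ)
    (hp_cont : Continuous p) (hp_pos : ∀ x, 0 < p x)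
    (hμ : μ = MeasureTheory.volume.withDensity fun x => ENNReal.ofReal (p x))
    (hmom : Integrable (fun y => y ^ 2) μ)
    (lam : ℝ) (hlam : 0 < lam) (ξ : ℝ)
    (hξ : (∫ y in Set.Iic ξ, (ξ - y) ∂μ) = 1 / lam)
    (hstar : ℝ → ℝ) (hhstar : ∀ y, hstar y = if y ≤ ξ then lam * (ξ - y) else 0) :
    (∀ y, 0 ≤ hstar y) ∧
    (∫ y, hstar y ∂μ) = 1 ∧
    ∀ h : ℝ → ℝ, Measurable h → (∀ y, 0 ≤ h y) → (∫ y, h y ∂μ) = 1 →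
      Integrable (fun y => h y ^ 2) μ → Integrable (fun y => |y| * h y) μ →
      (1 / 2) * (∫ y, hstar y ^ 2 ∂μ) + lam * (∫ y, y * hstar y ∂μ) ≤
        (1 / 2) * (∫ y, h y ^ 2 ∂μ) + lam * (∫ y, y * h y ∂μ) := by
  have e1 : hstar = (Set.Iic ξ).indicator (fun y => lam * (ξ - y)) := by
    funext y
    rw [hhstar, Set.indicator_apply]
    simp only [Set.mem_Iic]
  have e2 : (fun y => hstar y ^ 2) = (Set.Iic ξ).indicator (fun y => (lam * (ξ - y)) ^ 2) := by
    funext y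
    rw [hhstar, Set.indicator_apply]
    simp only [Set.mem_Iic]
    split_ifs <;> simp
  have e3 : (fun y => y * hstar y) = (Set.Iic ξ).indicator (fun y => y * (lam * (ξ - y))) := by
    funext y
    rw [hhstar, Set.indicator_apply]
    simp only [Set.mem_Iic]
    split_ifs <;> simp
  have i1 : Integrable (fun y : ℝ => y) μ := by
    refine ((integrable_const (1 : ℝ)).add hmom).mono' measurable_id.aestronglyMeasurable ?_
    refine Filter.Eventually.of_forall fun y => ?_
    simp only [Real.norm_eq_abs, Pi.add_apply]
    nlinarith [sq_abs y, sq_nonneg (|y| - 1), sq_nonneg (|y|)]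
  have j1 : Integrable hstar μ := by
    rw [e1]
    exact (((integrable_const ξ).sub i1).const_mul lam).indicator measurableSet_Iic
  have j2 : Integrable (fun y => hstar y ^ 2) μ := by
    rw [e2]
    refine Integrable.indicator ?_ measurableSet_Iic
    have := (((integrable_const (ξ ^ 2)).sub (i1.const_mul (2 * ξ))).add hmom).const_mul (lam ^ 2)
    refine this.congr (Filter.Eventually.of_forall fun y => ?_)
    simp only [Pi.add_apply, Pi.sub_apply]
    ring
  have j3 : Integrable (fun y => y * hstar y) μ := by
    rw [e3]
    refine Integrable.indicator ?_ measurableSet_Iic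
    have := ((i1.const_mul ξ).sub hmom).const_mul lam
    refine this.congr (Filter.Eventually.of_forall fun y => ?_)
    simp only [Pi.sub_apply]
    ring
  have hone : (∫ y, hstar y ∂μ) = 1 := by
    rw [e1, integral_indicator measurableSet_Iic, integral_const_mul, hξ]
    field_simp
  refine ⟨fun y => ?_, hone, ?_⟩
  · rw [hhstar]
    split_ifs with hy
    · exact mul_nonneg hlam.le (by linarith)
    · exact le_rfl
  intro h hm hnn h1 hsq habs
  have k1 : Integrable h μ := by
    by_contra hc
    rw [integral_undef hc] at h1
    exact zero_ne_one h1
  have k3 : Integrable (fun y => y * h y) μ := by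
    refine habs.mono' (measurable_id.mul hm).aestronglyMeasurable ?_
    refine Filter.Eventually.of_forall fun y => ?_
    rw [Real.norm_eq_abs, abs_mul, abs_of_nonneg (hnn y)]
  have key : ∀ g : ℝ → ℝ, Integrable g μ → Integrable (fun y => g y ^ 2) μ →
      Integrable (fun y => y * g y) μ → (∫ y, g y ∂μ) = 1 →
      Integrable (fun y => (1 / 2) * g y ^ 2 + lam * (y * g y) - lam * ξ * g y) μ ∧
      (∫ y, ((1 / 2) * g y ^ 2 + lam * (y * g y) - lam * ξ * g y) ∂μ) =
        (1 / 2) * (∫ y, g y ^ 2 ∂μ) + lam * (∫ y, y * g y ∂μ) - lam * ξ := by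
    intro g g1 g2 g3 g4
    have a := g2.const_mul (1 / 2)
    have b := g3.const_mul lam
    have c := g1.const_mul (lam * ξ)
    have ab : Integrable (fun y => (1 / 2) * g y ^ 2 + lam * (y * g y)) μ := a.add b
    refine ⟨ab.sub c, ?_⟩
    rw [integral_sub ab c, integral_add a b, integral_const_mul, integral_const_mul,
      integral_const_mul, g4, mul_one]
  obtain ⟨p1, p2⟩ := key hstar j1 j2 j3 hone
  obtain ⟨q1, q2⟩ := key h k1 hsq k3 h1
  have := integral_mono p1 q1 (fun y => by
    show (1 / 2) * hstar y ^ 2 + lam * (y * hstar y) - lam * ξ * hstar y ≤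
      (1 / 2) * h y ^ 2 + lam * (y * h y) - lam * ξ * h y
    rw [hhstar]
    split_ifs with hy
    · nlinarith [sq_nonneg (h y - lam * (ξ - y))]
    · have : 0 ≤ lam * (y - ξ) * h y :=
        mul_nonneg (mul_nonneg hlam.le (by linarith [not_le.mp hy])) (hnn y)
      nlinarith [sq_nonneg (h y)])
  rw [p2, q2] at this
  linarith
end

section
/- Let θ > 0 and suppose ξ ∈ ℝ satisfies E[(Y−ξ)·Y·1{Y≥ξ}] = (E[Y] + θ)·E[(Y−ξ)·1{Y≥ξ}]. Set λ := 1 / E[(Y−ξ)·1{Y≥ξ}] (the denominator is strictly positive) and h*(y) := λ·(y−ξ)·1{y≥ξ}. Then h* ≥ 0, ∫ h* dμ = 1, ∫ y·h*(y) dμ(y) = E[Y] + θ, and for every measurable h : ℝ → [0,∞) with ∫ h dμ = 1 and ∫ y·h(y) dμ(y) ≥ E[Y] + θ, one has ∫ h² dμ ≥ ∫ (h*)² dμ. (Solution of the sensitivity-value program with the opposite-direction outcome constraint.) -/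
open MeasureTheory

/-- Solution of the sensitivity-value program with the opposite-direction outcome
constraint: with `ξ` solving `E[(Y-ξ) Y 1{Y≥ξ}] = (E[Y]+θ) E[(Y-ξ) 1{Y≥ξ}]`,
`λ = 1 / E[(Y-ξ) 1{Y≥ξ}]` and `h*(y) = λ (y-ξ) 1{y≥ξ}`, the weight `h*` is nonnegative,
has mean one, attains `∫ y h*(y) dμ = E[Y] + θ`, and minimizes the second moment among
nonnegative mean-one weights `h` with `∫ y h(y) dμ ≥ E[Y] + θ`. -/
theorem stmt_11 (μ : Measure ℝ) [IsProbabilityMeasure μ] (p : ℝ → ℝ)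
    (hp_cont : Continuous p) (hp_pos : ∀ x, 0 < p x)
    (hμ : μ = MeasureTheory.volume.withDensity fun x => ENNReal.ofReal (p x))
    (hmom : Integrable (fun y => y ^ 2) μ)
    (θ : ℝ) (hθ : 0 < θ) (ξ : ℝ)
    (hroot : (∫ y in Set.Ici ξ, (y - ξ) * y ∂μ) =
      ((∫ y, y ∂μ) + θ) * ∫ y in Set.Ici ξ, (y - ξ) ∂μ)
    (lam : ℝ) (hlam : lam = (∫ y in Set.Ici ξ, (y - ξ) ∂μ)⁻¹)
    (hstar : ℝ → ℝ) (hhstar : ∀ y, hstar y = if ξ ≤ y then lam * (y - ξ) else 0) :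
    0 < (∫ y in Set.Ici ξ, (y - ξ) ∂μ) ∧
    (∀ y, 0 ≤ hstar y) ∧
    (∫ y, hstar y ∂μ) = 1 ∧
    (∫ y, y * hstar y ∂μ) = (∫ y, y ∂μ) + θ ∧
    ∀ h : ℝ → ℝ, Measurable h → (∀ y, 0 ≤ h y) →
      (∫ y, h y ∂μ) = 1 → (∫ y, y ∂μ) + θ ≤ (∫ y, y * h y ∂μ) →
      (∫⁻ y, ENNReal.ofReal (hstar y ^ 2) ∂μ) ≤ ∫⁻ y, ENNReal.ofReal (h y ^ 2) ∂μ := by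
  have hm2 : MemLp (fun y : ℝ => y) 2 μ :=
    (memLp_two_iff_integrable_sq measurable_id.aestronglyMeasurable).2 hmom
  have hid : Integrable (fun y : ℝ => y) μ := hm2.integrable (by norm_num)
  have hsub : Integrable (fun y : ℝ => y - ξ) μ := hid.sub (integrable_const ξ)
  have hpos : 0 < (∫ y in Set.Ici ξ, (y - ξ) ∂μ) := by
    rw [setIntegral_pos_iff_support_of_nonneg_ae ?_ hsub.integrableOn]
    · have hle : μ (Set.Ioi ξ) ≤ μ (Function.support (fun y => y - ξ) ∩ Set.Ici ξ) := by
        apply measure_mono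
        intro y hy
        have hy' : ξ < y := hy
        exact ⟨by simp only [Function.mem_support]; exact (sub_pos.2 hy').ne', hy'.le⟩
      refine lt_of_lt_of_le ?_ hle
      rw [pos_iff_ne_zero]
      intro h0
      rw [hμ, withDensity_apply_eq_zero (by fun_prop)] at h0
      have he : {x | ENNReal.ofReal (p x) ≠ 0} ∩ Set.Ioi ξ = Set.Ioi ξ := by
        ext x
        simp [hp_pos x]
      rw [he] at h0
      simp at h0
    · filter_upwards [ae_restrict_mem measurableSet_Ici] with y hy
      exact sub_nonneg.2 hy
  have hlpos : 0 < lam := by rw [hlam]; exact inv_pos.2 hpos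
  have hlm : lam * (∫ y in Set.Ici ξ, (y - ξ) ∂μ) = 1 := by
    rw [hlam]; exact inv_mul_cancel₀ hpos.ne'
  have hnn : ∀ y, 0 ≤ hstar y := by
    intro y
    rw [hhstar]
    split_ifs with hy
    · exact mul_nonneg hlpos.le (sub_nonneg.2 hy)
    · exact le_rfl
  have hi1 : hstar = (Set.Ici ξ).indicator (fun y => lam * (y - ξ)) := by
    funext y
    simp [hhstar, Set.indicator_apply]
  have hi2 : (fun y => y * hstar y) =
      (Set.Ici ξ).indicator (fun y => lam * ((y - ξ) * y)) := by
    funext y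
    simp only [hhstar, Set.indicator_apply, Set.mem_Ici]
    split_ifs <;> ring
  have hprod : Integrable (fun y : ℝ => (y - ξ) * y) μ := by
    have : (fun y : ℝ => (y - ξ) * y) = fun y => y ^ 2 - ξ * y := by funext y; ring
    rw [this]
    exact hmom.sub (hid.const_mul ξ)
  have hsi : Integrable hstar μ := by
    rw [hi1]; exact (hsub.const_mul lam).indicator measurableSet_Ici
  have hysi : Integrable (fun y => y * hstar y) μ := by
    rw [hi2]; exact (hprod.const_mul lam).indicator measurableSet_Ici
  have h1 : (∫ y, hstar y ∂μ) = 1 := by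
    rw [hi1, integral_indicator measurableSet_Ici, integral_const_mul, hlm]
  have h2 : (∫ y, y * hstar y ∂μ) = (∫ y, y ∂μ) + θ := by
    rw [hi2, integral_indicator measurableSet_Ici, integral_const_mul, hroot]
    linear_combination ((∫ y, y ∂μ) + θ) * hlm
  refine ⟨hpos, hnn, h1, h2, ?_⟩
  intro h hmeas h0 hint hcon
  have hsq : (fun y => hstar y ^ 2) = fun y => lam * (y * hstar y - ξ * hstar y) := by
    funext y
    rw [hhstar]
    split_ifs <;> ring
  have hsqi : Integrable (fun y => hstar y ^ 2) μ := by
    rw [hsq]; exact (hysi.sub (hsi.const_mul ξ)).const_mul lam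
  have hS : (∫ y, hstar y ^ 2 ∂μ) = lam * ((∫ y, y ∂μ) + θ - ξ) := by
    rw [hsq, integral_const_mul, integral_sub hysi (hsi.const_mul ξ), integral_const_mul, h1, h2,
      mul_one]
  by_cases htop : (∫⁻ y, ENNReal.ofReal (h y ^ 2) ∂μ) = ⊤
  · rw [htop]; exact le_top
  have hh2 : Integrable (fun y => h y ^ 2) μ := by
    refine ⟨(hmeas.pow_const 2).aestronglyMeasurable, ?_⟩
    rw [hasFiniteIntegral_iff_ofReal (Filter.Eventually.of_forall fun y => sq_nonneg (h y))]
    exact lt_top_iff_ne_top.2 htop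
  have hhL : MemLp h 2 μ := (memLp_two_iff_integrable_sq hmeas.aestronglyMeasurable).2 hh2
  have hhi : Integrable h μ := hhL.integrable (by norm_num)
  have hyh : Integrable (fun y => y * h y) μ := hm2.integrable_mul hhL
  rw [← ofReal_integral_eq_lintegral_ofReal hsqi
      (Filter.Eventually.of_forall fun y => sq_nonneg (hstar y)),
    ← ofReal_integral_eq_lintegral_ofReal hh2
      (Filter.Eventually.of_forall fun y => sq_nonneg (h y))]
  apply ENNReal.ofReal_le_ofReal
  have key : (∫ y, 2 * lam * (y * h y - ξ * h y) ∂μ) ≤ ∫ y, (h y ^ 2 + hstar y ^ 2) ∂μ := by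
    refine integral_mono ((hyh.sub (hhi.const_mul ξ)).const_mul _) (hh2.add hsqi) ?_
    intro y
    have hge : lam * (y - ξ) ≤ hstar y := by
      rw [hhstar]
      split_ifs with hy
      · exact le_rfl
      · exact mul_nonpos_of_nonneg_of_nonpos hlpos.le (by linarith)
    have := mul_le_mul_of_nonneg_right hge (h0 y)
    show 2 * lam * (y * h y - ξ * h y) ≤ h y ^ 2 + hstar y ^ 2
    nlinarith [sq_nonneg (h y - hstar y)]
  rw [integral_const_mul, integral_sub hyh (hhi.const_mul ξ), integral_const_mul, hint,
    integral_add hh2 hsqi] at key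
  have := mul_le_mul_of_nonneg_left hcon hlpos.le
  rw [hS] at key ⊢
  nlinarith
end

section
/- Let (Ω, 𝔽, P) be a probability space carrying a random variable X with values in a measurable space, an integrable real random variable Y₁, and a random variable Z with values in {0,1}. Let e be a version of the conditional probability P[Z = 1 ∣ σ(X, Y₁)], and assume e ≥ ρ almost surely for some constant ρ > 0. Then E[Z·Y₁ / e ∣ σ(X)] = E[Y₁ ∣ σ(X)] almost surely. (Inverse probability weighting identification formula for the conditional average treated outcome.) -/
open MeasureTheory

/-- The identification formula for general nested sub-σ-algebras. -/
theorem ipw_aux {Ω : Type*} {m₁ m₂ m₀ : MeasurableSpace Ω}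
    (P : Measure Ω) [IsProbabilityMeasure P] (h12 : m₁ ≤ m₂) (h2 : m₂ ≤ m₀)
    (Y Z : Ω → ℝ) (hY : Measurable[m₂] Y) (hZ : Measurable Z)
    (hZval : ∀ ω, Z ω = 0 ∨ Z ω = 1) (hYint : Integrable Y P) (e : Ω → ℝ)
    (he : e =ᵐ[P] P[Set.indicator {ω | Z ω = 1} (fun _ => (1 : ℝ)) | m₂])
    (ρ : ℝ) (hρ : 0 < ρ) (heρ : ∀ᵐ ω ∂P, ρ ≤ e ω) :
    P[fun ω => Z ω * Y ω / e ω | m₁] =ᵐ[P] P[Y | m₁] := by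
  have hg : Set.indicator {ω | Z ω = 1} (fun _ => (1 : ℝ)) = Z := by
    funext ω
    rcases hZval ω with h | h <;> simp [Set.indicator, h]
  rw [hg] at he
  have hZ1 : ∀ ω, |Z ω| ≤ 1 := fun ω => by
    rcases hZval ω with h | h <;> simp [h]
  have hZint : Integrable Z P :=
    Integrable.of_bound hZ.aestronglyMeasurable 1 (Filter.Eventually.of_forall hZ1)
  have hEm : Measurable[m₂] (P[Z | m₂]) := stronglyMeasurable_condExp.measurable
  have hfm : Measurable[m₂] (fun ω => Y ω / (P[Z | m₂]) ω) := hY.div hEm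
  have hfg : Integrable ((fun ω => Y ω / (P[Z | m₂]) ω) * Z) P := by
    refine (hYint.norm.div_const ρ).mono'
      (((hfm.mono h2 le_rfl).mul hZ).aestronglyMeasurable) ?_
    filter_upwards [he, heρ] with ω h1 h3
    rw [h1] at h3
    have hpos : 0 < (P[Z | m₂]) ω := hρ.trans_le h3
    simp only [Pi.mul_apply, norm_mul, norm_div, Real.norm_eq_abs]
    rw [abs_of_pos hpos]
    calc |Y ω| / (P[Z | m₂]) ω * |Z ω| ≤ |Y ω| / (P[Z | m₂]) ω * 1 := by
          gcongr
          exact hZ1 ω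
      _ ≤ |Y ω| / ρ := by rw [mul_one]; gcongr
  have key := condExp_mul_of_stronglyMeasurable_left hfm.stronglyMeasurable hfg hZint
  have key2 : P[(fun ω => Y ω / (P[Z | m₂]) ω) * Z | m₂] =ᵐ[P] Y := by
    filter_upwards [key, he, heρ] with ω h0 h1 h3
    rw [h1] at h3
    have hpos : 0 < (P[Z | m₂]) ω := hρ.trans_le h3
    rw [h0, Pi.mul_apply, div_mul_cancel₀ _ hpos.ne']
  have heq : (fun ω => Z ω * Y ω / e ω) =ᵐ[P] (fun ω => Y ω / (P[Z | m₂]) ω) * Z := by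
    filter_upwards [he] with ω h1
    rw [h1, Pi.mul_apply]
    ring
  exact (condExp_congr_ae heq).trans
    ((condExp_condExp_of_le h12 h2).symm.trans (condExp_congr_ae key2))

/-- Inverse probability weighting identification formula for the conditional average
treated outcome: if `e` is a version of `P[Z = 1 ∣ σ(X, Y₁)]` bounded below by `ρ > 0`
a.s., then `E[Z Y₁ / e ∣ σ(X)] = E[Y₁ ∣ σ(X)]` a.s. -/
theorem stmt_12 {Ω : Type*} [MeasurableSpace Ω] {β : Type*} [MeasurableSpace β]
    (P : Measure Ω) [IsProbabilityMeasure P]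
    (X : Ω → β) (Y₁ : Ω → ℝ) (Z : Ω → ℝ)
    (hX : Measurable X) (hY₁ : Measurable Y₁) (hZ : Measurable Z)
    (hZval : ∀ ω, Z ω = 0 ∨ Z ω = 1)
    (hY₁int : Integrable Y₁ P)
    (e : Ω → ℝ)
    (he : e =ᵐ[P]
      P[Set.indicator {ω | Z ω = 1} (fun _ => (1 : ℝ)) |
        MeasurableSpace.comap (fun ω => (X ω, Y₁ ω)) inferInstance])
    (ρ : ℝ) (hρ : 0 < ρ) (heρ : ∀ᵐ ω ∂P, ρ ≤ e ω) :
    P[fun ω => Z ω * Y₁ ω / e ω | MeasurableSpace.comap X inferInstance] =ᵐ[P]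
      P[Y₁ | MeasurableSpace.comap X inferInstance] := by
  have hpair : Measurable (fun ω => (X ω, Y₁ ω)) := hX.prodMk hY₁
  have hm2 := hpair.comap_le
  have hm12 : MeasurableSpace.comap X inferInstance ≤
      MeasurableSpace.comap (fun ω => (X ω, Y₁ ω)) inferInstance :=
    (measurable_fst.comp (comap_measurable (fun ω => (X ω, Y₁ ω)))).comap_le
  have hYm : Measurable[MeasurableSpace.comap (fun ω => (X ω, Y₁ ω)) inferInstance] Y₁ :=
    measurable_snd.comp (comap_measurable (fun ω => (X ω, Y₁ ω)))
  exact ipw_aux P hm12 hm2 Y₁ Z hYm hZ hZval hY₁int e he ρ hρ heρ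
end

section
/- Define g(ξ) := E[(ξ−Y)·1{Y≤ξ}] = ∫ max(ξ−y, 0) dμ(y) and ζ(ξ) := 1/g(ξ) for ξ ∈ ℝ. Then ζ is a strictly decreasing bijection from ℝ onto (0, ∞), and its inverse ζ⁻¹ : (0,∞) → ℝ is differentiable with derivative (ζ⁻¹)'(λ) = − g(ζ⁻¹(λ))² / F(ζ⁻¹(λ)) = − (1/λ²) / F(ζ⁻¹(λ)); in particular (ζ⁻¹)' is negative and bounded on every compact interval [λ_min, λ_max] ⊂ (0,∞). (The inverse-derivative identity underlying Lemma G.2 on Lipschitz continuity of the influence functions in λ.) -/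
open MeasureTheory

theorem aux_max (μ : Measure ℝ) (ξ : ℝ) :
    ∫ y in Set.Iic ξ, (ξ - y) ∂μ = ∫ y, max (ξ - y) 0 ∂μ := by
  rw [← integral_indicator measurableSet_Iic]
  congr 1
  ext y
  by_cases h : y ≤ ξ
  · rw [Set.indicator_of_mem (by exact h), max_eq_left (by linarith)]
  · rw [Set.indicator_of_notMem (by exact h), max_eq_right (by linarith)]

theorem aux_int (μ : Measure ℝ) [IsProbabilityMeasure μ]
    (hmom : Integrable (fun y : ℝ => y ^ 2) μ) : Integrable (fun y : ℝ => y) μ := by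
  refine Integrable.mono' (hmom.add (integrable_const (1 : ℝ)))
    measurable_id.aestronglyMeasurable (Filter.Eventually.of_forall fun y => ?_)
  simp only [Pi.add_apply, Real.norm_eq_abs]
  rw [abs_le]
  constructor <;> nlinarith [sq_nonneg (y + 1), sq_nonneg (y - 1)]

theorem aux_imax (μ : Measure ℝ) [IsProbabilityMeasure μ]
    (h : Integrable (fun y : ℝ => y) μ) (ξ : ℝ) : Integrable (fun y : ℝ => max (ξ - y) 0) μ :=
  ((integrable_const ξ).sub h).pos_part

theorem aux_deriv_s16 (μ : Measure ℝ) [IsProbabilityMeasure μ] (h0 : ∀ x, μ {x} = 0)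
    (h : Integrable (fun y : ℝ => y) μ) (ξ : ℝ) :
    HasDerivAt (fun ξ => ∫ y, max (ξ - y) 0 ∂μ) (μ (Set.Iic ξ)).toReal ξ := by
  have hi : ∫ y, (Set.Iic ξ).indicator (fun _ => (1 : ℝ)) y ∂μ = (μ (Set.Iic ξ)).toReal := by
    rw [integral_indicator measurableSet_Iic]
    simp [Measure.real]
  rw [← hi]
  refine (hasDerivAt_integral_of_dominated_loc_of_lip (bound := fun _ => (1 : ℝ))
    (s := Set.univ) Filter.univ_mem
    (Filter.Eventually.of_forall fun x => (aux_imax μ h x).aestronglyMeasurable)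
    (aux_imax μ h ξ) ?_ ?_ (integrable_const _) ?_).2
  · exact (measurable_const.indicator measurableSet_Iic).aestronglyMeasurable
  · refine Filter.Eventually.of_forall fun y => ?_
    refine LipschitzOnWith.of_dist_le_mul fun a _ b _ => ?_
    simp only [Real.dist_eq]
    have := abs_max_sub_max_le_abs (a - y) (b - y) 0
    simpa using this
  · have : ∀ᵐ y ∂μ, y ≠ ξ := by
      rw [ae_iff]; simpa using h0 ξ
    filter_upwards [this] with y hy
    rcases lt_or_gt_of_ne hy with hy | hy
    · rw [Set.indicator_of_mem (by exact hy.le)]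
      refine ((hasDerivAt_id ξ).sub_const y).congr_of_eventuallyEq ?_
      filter_upwards [lt_mem_nhds hy] with a ha
      simp; exact ha.le
    · rw [Set.indicator_of_notMem (by simpa using hy)]
      refine (hasDerivAt_const ξ (0 : ℝ)).congr_of_eventuallyEq ?_
      filter_upwards [gt_mem_nhds hy] with a ha
      simp; exact ha.le

theorem aux_lim (μ : Measure ℝ) [IsProbabilityMeasure μ]
    (h : Integrable (fun y : ℝ => y) μ) :
    Filter.Tendsto (fun ξ => ∫ y, max (ξ - y) 0 ∂μ) Filter.atBot (nhds 0) := by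
  have : (0 : ℝ) = ∫ y : ℝ, (0 : ℝ) ∂μ := by simp
  suffices H : Filter.Tendsto (fun ξ => ∫ y, max (ξ - y) 0 ∂μ) Filter.atBot
      (nhds (∫ y : ℝ, (0 : ℝ) ∂μ)) by rwa [← this] at H
  refine tendsto_integral_filter_of_dominated_convergence (fun y => |y|)
    (Filter.Eventually.of_forall fun x => (aux_imax μ h x).aestronglyMeasurable) ?_ h.abs ?_
  · filter_upwards [Filter.eventually_le_atBot (0 : ℝ)] with a ha
    refine Filter.Eventually.of_forall fun y => ?_
    rw [Real.norm_eq_abs, abs_of_nonneg (le_max_right _ _)]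
    exact max_le (by linarith [neg_abs_le y]) (abs_nonneg y)
  · refine Filter.Eventually.of_forall fun y => ?_
    refine tendsto_const_nhds.congr' ?_
    filter_upwards [Filter.eventually_le_atBot y] with a ha
    simp [ha]

theorem aux_sub (μ : Measure ℝ) [IsProbabilityMeasure μ]
    (h : Integrable (fun y : ℝ => y) μ) (a b : ℝ) :
    (μ (Set.Iic a)).toReal * (b - a) ≤ ∫ y, max (b - y) 0 ∂μ - ∫ y, max (a - y) 0 ∂μ := by
  have hi : ∫ y, (Set.Iic a).indicator (fun _ => b - a) y ∂μ
      = (μ (Set.Iic a)).toReal * (b - a) := by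
    rw [integral_indicator measurableSet_Iic]
    simp [Measure.real]
  rw [← hi, ← integral_sub (aux_imax μ h b) (aux_imax μ h a)]
  refine integral_mono ((integrable_const _).indicator measurableSet_Iic)
    ((aux_imax μ h b).sub (aux_imax μ h a)) fun y => ?_
  by_cases hy : y ≤ a
  · rw [Set.indicator_of_mem (by exact hy)]
    simp only
    rw [max_eq_left (by linarith : 0 ≤ a - y)]
    linarith [le_max_left (b - y) 0]
  · rw [Set.indicator_of_notMem (by exact hy)]
    simp only
    rw [max_eq_right (by linarith : a - y ≤ 0)]
    linarith [le_max_right (b - y) 0]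

/-- The inverse-derivative identity underlying Lemma G.2: with
`g(ξ) = E[(ξ-Y) 1{Y≤ξ}]` and `ζ(ξ) = 1/g(ξ)`, the map `ζ` is a strictly decreasing
bijection from `ℝ` onto `(0, ∞)`, and any inverse `ζ⁻¹` is differentiable on `(0, ∞)`
with derivative `-(g(ζ⁻¹ λ))² / F(ζ⁻¹ λ) = -(1/λ²) / F(ζ⁻¹ λ)`, which is negative and
bounded on every compact interval `[λmin, λmax] ⊆ (0, ∞)`. -/
theorem stmt_16 (μ : Measure ℝ) [IsProbabilityMeasure μ] (p : ℝ → ℝ)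
    (hp_cont : Continuous p) (hp_pos : ∀ x, 0 < p x)
    (hμ : μ = MeasureTheory.volume.withDensity fun x => ENNReal.ofReal (p x))
    (hmom : Integrable (fun y => y ^ 2) μ) :
    StrictAnti (fun ξ : ℝ => (∫ y in Set.Iic ξ, (ξ - y) ∂μ)⁻¹) ∧
    Set.BijOn (fun ξ : ℝ => (∫ y in Set.Iic ξ, (ξ - y) ∂μ)⁻¹) Set.univ (Set.Ioi 0) ∧
    ∀ ζinv : ℝ → ℝ,
      (∀ ξ : ℝ, ζinv ((∫ y in Set.Iic ξ, (ξ - y) ∂μ)⁻¹) = ξ) →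
      (∀ lam ∈ Set.Ioi (0 : ℝ),
        (∫ y in Set.Iic (ζinv lam), (ζinv lam - y) ∂μ)⁻¹ = lam) →
      (∀ lam ∈ Set.Ioi (0 : ℝ),
        HasDerivAt ζinv
          (-(∫ y in Set.Iic (ζinv lam), (ζinv lam - y) ∂μ) ^ 2 /
            (μ (Set.Iic (ζinv lam))).toReal) lam ∧
        -(∫ y in Set.Iic (ζinv lam), (ζinv lam - y) ∂μ) ^ 2 /
            (μ (Set.Iic (ζinv lam))).toReal =
          -(1 / lam ^ 2) / (μ (Set.Iic (ζinv lam))).toReal ∧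
        -(∫ y in Set.Iic (ζinv lam), (ζinv lam - y) ∂μ) ^ 2 /
            (μ (Set.Iic (ζinv lam))).toReal < 0) ∧
      ∀ lmin lmax : ℝ, 0 < lmin → lmin ≤ lmax →
        ∃ C : ℝ, ∀ lam ∈ Set.Icc lmin lmax,
          |(-(∫ y in Set.Iic (ζinv lam), (ζinv lam - y) ∂μ) ^ 2 /
            (μ (Set.Iic (ζinv lam))).toReal)| ≤ C := by
  simp only [aux_max]
  have h := aux_int μ hmom
  have hFpos : ∀ a, 0 < (μ (Set.Iic a)).toReal := by
    intro a
    refine ENNReal.toReal_pos (fun h1 => ?_) (measure_ne_top _ _)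
    rw [hμ, withDensity_apply_eq_zero (by fun_prop)] at h1
    have : {x | ENNReal.ofReal (p x) ≠ 0} ∩ Set.Iic a = Set.Iic a := by
      ext x; simp [hp_pos x]
    rw [this] at h1
    simp at h1
  have h0 : ∀ x, μ {x} = 0 := by
    intro x
    rw [hμ]
    exact withDensity_absolutelyContinuous _ _ (by simp)
  have hd := aux_deriv_s16 μ h0 h
  have hl := aux_lim μ h
  have hs := aux_sub μ h
  have hnn : ∀ ξ, 0 ≤ ∫ y, max (ξ - y) 0 ∂μ := fun ξ =>
    integral_nonneg fun y => le_max_right _ _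
  generalize hg : (fun ξ : ℝ => ∫ y, max (ξ - y) 0 ∂μ) = g at hd hl
  have hg' : ∀ ξ, ∫ y, max (ξ - y) 0 ∂μ = g ξ := fun ξ => by rw [← hg]
  simp only [hg'] at hs hnn ⊢
  have hmono : StrictMono g := by
    intro a b hab
    have := hs a b
    have := mul_pos (hFpos a) (sub_pos.2 hab)
    linarith
  have hpos : ∀ x, 0 < g x := fun x => (hnn (x - 1)).trans_lt (hmono (by linarith))
  have hcont : Continuous g := continuous_iff_continuousAt.2 fun x => (hd x).continuousAt
  have hanti : StrictAnti (fun ξ => (g ξ)⁻¹) := fun a b hab =>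
    inv_strictAnti₀ (hpos a) (hmono hab)
  refine ⟨hanti, ⟨fun x _ => by simpa using hpos x, hanti.injective.injOn, ?_⟩, ?_⟩
  · intro l hl0
    have hl0 : 0 < l := hl0
    have hli : 0 < l⁻¹ := inv_pos.2 hl0
    obtain ⟨x, hx⟩ := mem_range_of_exists_le_of_exists_ge hcont (c := l⁻¹)
      ((hl.eventually (gt_mem_nhds hli)).exists.imp fun _ h => h.le)
      ⟨l⁻¹ / (μ (Set.Iic 0)).toReal, by
        have h1 := hs 0 (l⁻¹ / (μ (Set.Iic 0)).toReal)
        rw [sub_zero, mul_div_cancel₀ _ (hFpos 0).ne'] at h1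
        linarith [hpos 0]⟩
    exact ⟨x, trivial, by simp [hx]⟩
  intro z hz1 hz2
  have hgz : ∀ l, 0 < l → g (z l) = 1 / l := fun l hl' => by
    have := hz2 l hl'
    rw [one_div, ← this, inv_inv, this]
  have hzanti : StrictAntiOn z (Set.Ioi 0) := by
    intro a ha b hb hab
    rw [← hmono.lt_iff_lt, hgz a ha, hgz b hb]
    exact one_div_lt_one_div_of_lt ha hab
  refine ⟨fun l hl' => ?_, fun lmin lmax h1 h2 => ?_⟩
  · have hl' : 0 < l := hl'
    refine ⟨?_, by rw [hgz l hl']; simp, ?_⟩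
    · have himg : Set.image (fun x => -z x) (Set.Ioi 0) = Set.univ := by
        refine Set.eq_univ_of_forall fun x => ⟨(g (-x))⁻¹, ?_, ?_⟩
        · exact inv_pos.2 (hpos _)
        · simp [hz1]
      have hc : ContinuousAt (fun x => -z x) l := by
        refine StrictMonoOn.continuousAt_of_image_mem_nhds (s := Set.Ioi 0) ?_
          (Ioi_mem_nhds hl') (by rw [himg]; exact Filter.univ_mem)
        intro a ha b hb hab
        exact neg_lt_neg (hzanti ha hb hab)
      have hc' : ContinuousAt z l := by
        have h9 := continuous_neg.continuousAt.comp hc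
        simpa [Function.comp_def] using h9
      have hD := (hd (z l)).inv (hpos _).ne'
      have := HasDerivAt.of_local_left_inverse hc' hD
        (div_ne_zero (neg_ne_zero.2 (hFpos _).ne') (pow_ne_zero _ (hpos _).ne'))
        (by filter_upwards [Ioi_mem_nhds hl'] with a ha using hz2 a ha)
      rwa [inv_div, div_neg, ← neg_div] at this
    · rw [neg_div]
      exact neg_neg_of_pos (div_pos (pow_pos (hpos _) 2) (hFpos _))
  · refine ⟨(1 / lmin) ^ 2 / (μ (Set.Iic (z lmax))).toReal, fun l hl' => ?_⟩
    have hl0 : 0 < l := h1.trans_le hl'.1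
    rw [neg_div, abs_neg, abs_of_pos (div_pos (pow_pos (hpos _) 2) (hFpos _)), hgz l hl0]
    have h3 : z lmax ≤ z l := hzanti.antitoneOn hl0 (hl0.trans_le hl'.2) hl'.2
    have h4 : (μ (Set.Iic (z lmax))).toReal ≤ (μ (Set.Iic (z l))).toReal :=
      ENNReal.toReal_mono (measure_ne_top _ _) (measure_mono (Set.Iic_subset_Iic.2 h3))
    have h5 := one_div_le_one_div_of_le h1 hl'.1
    have h6 : 0 < 1 / l := by positivity
    exact div_le_div₀ (by positivity) (pow_le_pow_left₀ h6.le h5 2) (hFpos _) h4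
end

section
/- Let (A, B) be random variables on a probability space with A real-valued and integrable, and B taking values in a countable set, and fix b with P(B = b) > 0. Let s be a bounded measurable real function of (A, B) with E[s(A,B)] = 0 and with A·s(A,B) integrable. For |ε| < 1/‖s‖_∞ define the tilted conditional expectation E_ε[A ∣ B = b] := E[A·1{B=b}·(1 + ε·s(A,B))] / E[1{B=b}·(1 + ε·s(A,B))]. Then the map ε ↦ E_ε[A ∣ B = b] is differentiable at ε = 0 with derivative E[ (1{B=b} / P(B=b)) · (A − E[A ∣ B = b]) · s(A,B) ]. (Lemma C.2: the efficient influence function of a conditional expectation as a pathwise derivative.) -/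
open MeasureTheory

/-- Lemma C.2: the efficient influence function of a conditional expectation as a
pathwise derivative.  For a zero-mean bounded score `s` and the tilted conditional
expectation `E_ε[A ∣ B = b] = E[A 1{B=b} (1 + ε s(A,B))] / E[1{B=b} (1 + ε s(A,B))]`,
the map `ε ↦ E_ε[A ∣ B = b]` is differentiable at `ε = 0` with derivative
`E[(1{B=b}/P(B=b)) (A - E[A ∣ B=b]) s(A,B)]`. -/
theorem stmt_17 {Ω β : Type*} [MeasurableSpace Ω] [MeasurableSpace β] [Countable β] [DecidableEq β]
    [MeasurableSingletonClass β]
    (P : Measure Ω) [IsProbabilityMeasure P]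
    (A : Ω → ℝ) (B : Ω → β) (hAm : Measurable A) (hA : Integrable A P) (hB : Measurable B)
    (b : β) (hb : 0 < (P {ω | B ω = b}).toReal)
    (s : ℝ → β → ℝ) (hs : Measurable (Function.uncurry s))
    (C : ℝ) (hsC : ∀ x c, |s x c| ≤ C)
    (hs0 : (∫ ω, s (A ω) (B ω) ∂P) = 0)
    (hAs : Integrable (fun ω => A ω * s (A ω) (B ω)) P) :
    HasDerivAt
      (fun ε : ℝ =>
        (∫ ω, A ω * (if B ω = b then (1 : ℝ) else 0) * (1 + ε * s (A ω) (B ω)) ∂P) /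
          (∫ ω, (if B ω = b then (1 : ℝ) else 0) * (1 + ε * s (A ω) (B ω)) ∂P))
      (∫ ω, (if B ω = b then (1 : ℝ) else 0) / (P {ω' | B ω' = b}).toReal *
          (A ω -
            (∫ ω', A ω' * (if B ω' = b then (1 : ℝ) else 0) ∂P) /
              (P {ω' | B ω' = b}).toReal) *
          s (A ω) (B ω) ∂P)
      0 := by
  have hS : MeasurableSet {ω | B ω = b} := hB (measurableSet_singleton b)
  set p := (P {ω | B ω = b}).toReal with hp
  set I : Ω → ℝ := fun ω => if B ω = b then (1 : ℝ) else 0 with hI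
  have hIm : Measurable I := Measurable.ite hS measurable_const measurable_const
  have hIb : ∀ ω, ‖I ω‖ ≤ 1 := by
    intro ω
    simp only [hI]
    split_ifs <;> simp
  have hsm : Measurable (fun ω => s (A ω) (B ω)) := hs.comp (hAm.prodMk hB)
  have hsi : Integrable (fun ω => s (A ω) (B ω)) P :=
    Integrable.of_bound hsm.aestronglyMeasurable C
      (Filter.Eventually.of_forall fun ω => hsC _ _)
  have key : ∀ f : Ω → ℝ, Integrable f P → Integrable (fun ω => I ω * f ω) P := fun f hf =>
    hf.bdd_mul hIm.aestronglyMeasurable (Filter.Eventually.of_forall hIb)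
  have h1 := key _ hA
  have h2 := key _ hAs
  have h3 := key _ hsi
  have h4 : Integrable I P := by simpa using key _ (integrable_const (1 : ℝ))
  have hIp : ∫ ω, I ω ∂P = p := by
    have : I = Set.indicator {ω | B ω = b} (fun _ => (1 : ℝ)) := by
      ext ω
      simp [hI, Set.indicator_apply]
    rw [this, integral_indicator_const _ hS]
    simp [hp, Measure.real]
  have hN : ∀ ε : ℝ, ∫ ω, A ω * I ω * (1 + ε * s (A ω) (B ω)) ∂P
      = (∫ ω, I ω * A ω ∂P) + ε * ∫ ω, I ω * (A ω * s (A ω) (B ω)) ∂P := by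
    intro ε
    rw [← integral_const_mul, ← integral_add h1 (h2.const_mul ε)]
    congr 1
    ext ω
    ring
  have hD : ∀ ε : ℝ, ∫ ω, I ω * (1 + ε * s (A ω) (B ω)) ∂P
      = p + ε * ∫ ω, I ω * s (A ω) (B ω) ∂P := by
    intro ε
    rw [← integral_const_mul, ← hIp, ← integral_add h4 (h3.const_mul ε)]
    congr 1
    ext ω
    ring
  have hM : ∫ ω, A ω * I ω ∂P = ∫ ω, I ω * A ω ∂P := by
    congr 1
    ext ω
    ring
  have hR : ∀ m : ℝ, ∫ ω, I ω / p * (A ω - m) * s (A ω) (B ω) ∂P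
      = p⁻¹ * (∫ ω, I ω * (A ω * s (A ω) (B ω)) ∂P)
        - p⁻¹ * m * ∫ ω, I ω * s (A ω) (B ω) ∂P := by
    intro m
    rw [← integral_const_mul, ← integral_const_mul,
      ← integral_sub (h2.const_mul _) (h3.const_mul _)]
    congr 1
    ext ω
    ring
  change HasDerivAt (fun ε : ℝ => (∫ ω, A ω * I ω * (1 + ε * s (A ω) (B ω)) ∂P) /
    (∫ ω, I ω * (1 + ε * s (A ω) (B ω)) ∂P))
    (∫ ω, I ω / p * (A ω - (∫ ω', A ω' * I ω' ∂P) / p) * s (A ω) (B ω) ∂P) 0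
  simp only [hN, hD]
  rw [hR, hM]
  generalize (∫ ω, I ω * A ω ∂P) = N0
  generalize (∫ ω, I ω * (A ω * s (A ω) (B ω)) ∂P) = N1
  generalize (∫ ω, I ω * s (A ω) (B ω) ∂P) = D1
  have hp0 : p ≠ 0 := hb.ne'
  have d : ∀ a c : ℝ, HasDerivAt (fun ε : ℝ => a + ε * c) c 0 := fun a c => by
    simpa using ((hasDerivAt_id (0 : ℝ)).mul_const c).const_add a
  have e : (N1 * (p + 0 * D1) - (N0 + 0 * N1) * D1) / (p + 0 * D1) ^ 2
      = p⁻¹ * N1 - p⁻¹ * (N0 / p) * D1 := by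
    simp only [zero_mul, add_zero]
    field_simp
  have h := (d N0 N1).fun_div (d p D1) (by simpa using hp0)
  exact h.congr_deriv e
end

section
/- Let ν be a Borel probability measure on ℝ with finite first moment and with ν({q}) = ν({q̂}) = 0, and let α, q, q̂, w₋, w₊ be real numbers. Define g₊(y) := (1 − α − 1{y > q})·q + y·1{y > q}, ĝ₊(y) := (1 − α − 1{y > q̂})·q̂ + y·1{y > q̂}, g₋(y) := (α − 1{y < q})·q + y·1{y < q}, and ĝ₋(y) := (α − 1{y < q̂})·q̂ + y·1{y < q̂}. Then ∫ [ w₊·(ĝ₊(y) − g₊(y)) + w₋·(ĝ₋(y) − g₋(y)) ] dν(y) = (w₊ − w₋) · [ (q̂ − q)·(ν({y : y < q̂}) − α) − ∫ |y − q|·1{ min(q,q̂) < y < max(q,q̂) } dν(y) ]. (The deterministic bias decomposition identity proved in Appendix F for the one-step estimator in the L∞-analysis.) -/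
open MeasureTheory

/-- The deterministic bias decomposition identity of Appendix F for the one-step estimator
in the `L∞`-analysis: for a Borel probability measure `ν` with finite first moment and no
atoms at `q` and `q̂`,
`∫ [w₊ (ĝ₊ - g₊) + w₋ (ĝ₋ - g₋)] dν
  = (w₊ - w₋) [(q̂ - q)(ν{y < q̂} - α) - ∫ |y - q| 1{min(q,q̂) < y < max(q,q̂)} dν]`. -/
theorem stmt_19 (ν : Measure ℝ) [IsProbabilityMeasure ν]
    (hmom : Integrable (fun y => y) ν)
    (q qh : ℝ) (hq : ν {q} = 0) (hqh : ν {qh} = 0)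
    (α wm wp : ℝ) :
    (∫ y, (wp * (((1 - α - (if qh < y then (1 : ℝ) else 0)) * qh +
              y * (if qh < y then (1 : ℝ) else 0)) -
            ((1 - α - (if q < y then (1 : ℝ) else 0)) * q +
              y * (if q < y then (1 : ℝ) else 0))) +
          wm * (((α - (if y < qh then (1 : ℝ) else 0)) * qh +
              y * (if y < qh then (1 : ℝ) else 0)) -
            ((α - (if y < q then (1 : ℝ) else 0)) * q +
              y * (if y < q then (1 : ℝ) else 0)))) ∂ν) =
      (wp - wm) *
        ((qh - q) * ((ν (Set.Iio qh)).toReal - α) -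
          ∫ y, |y - q| * (if min q qh < y ∧ y < max q qh then (1 : ℝ) else 0) ∂ν) := by
  have hI1 : Integrable (fun y : ℝ => (Set.Iio qh).indicator (fun _ => (1 : ℝ)) y) ν :=
    (integrable_const (1 : ℝ)).indicator measurableSet_Iio
  have hI2 : Integrable (fun y : ℝ =>
      |y - q| * (if min q qh < y ∧ y < max q qh then (1 : ℝ) else 0)) ν := by
    have h : Integrable (fun y : ℝ => |y - q|) ν := (hmom.sub (integrable_const q)).abs
    have h2 := h.indicator (measurableSet_Ioo : MeasurableSet (Set.Ioo (min q qh) (max q qh)))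
    refine h2.congr (Filter.Eventually.of_forall fun y => ?_)
    simp [Set.indicator_apply, Set.mem_Ioo]
  have hν : ∫ y, (Set.Iio qh).indicator (fun _ => (1 : ℝ)) y ∂ν = (ν (Set.Iio qh)).toReal := by
    rw [integral_indicator measurableSet_Iio]
    simp [Measure.real]
  have hne1 : ∀ᵐ y ∂ν, y ≠ q := by
    rw [ae_iff]; simpa using hq
  have hne2 : ∀ᵐ y ∂ν, y ≠ qh := by
    rw [ae_iff]; simpa using hqh
  have hI3 : Integrable (fun y : ℝ =>
      (qh - q) * ((Set.Iio qh).indicator (fun _ => (1 : ℝ)) y - α)) ν :=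
    (hI1.sub (integrable_const α)).const_mul _
  have hR : (qh - q) * ((ν (Set.Iio qh)).toReal - α) =
      ∫ y, (qh - q) * ((Set.Iio qh).indicator (fun _ => (1 : ℝ)) y - α) ∂ν := by
    rw [integral_const_mul, integral_sub hI1 (integrable_const α), hν]
    simp
  rw [hR, ← integral_sub hI3 hI2, ← integral_const_mul]
  refine integral_congr_ae ?_
  filter_upwards [hne1, hne2] with y h1 h2
  simp only [Set.indicator_apply, Set.mem_Iio]
  rcases lt_or_gt_of_ne h1 with h1 | h1 <;> rcases lt_or_gt_of_ne h2 with h2 | h2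
  · have : ¬ (min q qh < y) := by simp [h1.le, h2.le]
    simp only [h1, h2, h1.not_gt, h2.not_gt, this, if_true, if_false, false_and]
    ring
  · have ha : min q qh < y := by simp [h2]
    have hb : y < max q qh := by simp [h1]
    rw [abs_of_neg (by linarith)]
    simp only [h1, h2, h1.not_gt, h2.not_gt, ha, hb, if_true, if_false, and_self]
    ring
  · have ha : min q qh < y := by simp [h1]
    have hb : y < max q qh := by simp [h2]
    rw [abs_of_pos (by linarith)]
    simp only [h1, h2, h1.not_gt, h2.not_gt, ha, hb, if_true, if_false, and_self]
    ring
  · have : ¬ (y < max q qh) := by simp [h1.le, h2.le]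
    simp only [h1, h2, h1.not_gt, h2.not_gt, this, if_true, if_false, and_false]
    ring
end
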